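/- Finiteness of the type transition system: for any two cherry-pi session types T1 and T2, the set of type configurations reachable via |-->* from the initial configuration init(T1,T2)[T1 > T1 || T2 > T2] is finite; consequently, checking compliance T1 -|| T2 reduces to inspecting the finitely many reachable configurations without |-->-successors. -/

import Mathlib

set_option autoImplicit true

abbrev Name := String

inductive CSort | bool | int | str
deriving DecidableEq

/-! ## Session types -/

/-- cherry-pi session types. `done` renders the type `end` (successful
termination) and `err` the faulty termination type. -/
inductive SType
| out : CSort → SType → SType
| inp : CSort → SType → SType
| sel : Name → SType → SType
| brn : List (Name × SType) → SType
| choice : SType → SType → SType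
| tvar : Name → SType
| mu : Name → SType → SType
| done : SType
| err : SType
| cmt : SType → SType
| roll : SType
| abt : SType

/-- Substitution of a session type `U` for a type variable `t`. -/
def SType.subst (t : Name) (U : SType) (T : SType) : SType :=
  match T with
  | .out S T => .out S (SType.subst t U T)
  | .inp S T => .inp S (SType.subst t U T)
  | .sel l T => .sel l (SType.subst t U T)
  | .brn bs => .brn (bs.attach.map (fun b => (b.1.1, SType.subst t U b.1.2)))
  | .choice T1 T2 => .choice (SType.subst t U T1) (SType.subst t U T2)
  | .tvar u => if u = t then U else .tvar u
  | .mu u T => if u = t then .mu u T else .mu u (SType.subst t U T)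
  | .done => .done
  | .err => .err
  | .cmt T => .cmt (SType.subst t U T)
  | .roll => .roll
  | .abt => .abt
termination_by sizeOf T
decreasing_by
  all_goals simp_wf
  all_goals try omega
  all_goals
    (have h1 := List.sizeOf_lt_of_mem b.2
     obtain ⟨⟨l, P⟩, hb⟩ := b
     simp_all
     omega)

/-- Labels of the semantics of types. -/
inductive TLabel
| out : CSort → TLabel
| inp : CSort → TLabel
| sel : Name → TLabel
| brn : Name → TLabel
| tau : TLabel
| cmt : TLabel
| roll : TLabel
| abt : TLabel

/-- The labelled semantics of session types (rules [TS-Snd], [TS-Rcv],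
[TS-Sel], [TS-Br], [TS-If1], [TS-If2], [TS-rec], [TS-Cmt], [TS-Rll], [TS-Abt]). -/
inductive TStep : SType → TLabel → SType → Prop
| out : TStep (.out S T) (.out S) T
| inp : TStep (.inp S T) (.inp S) T
| sel : TStep (.sel l T) (.sel l) T
| brn : (l, T) ∈ bs → TStep (.brn bs) (.brn l) T
| choiceL : TStep (.choice T1 T2) .tau T1
| choiceR : TStep (.choice T1 T2) .tau T2
| unfold : TStep (SType.subst t (.mu t T) T) lab T' → TStep (.mu t T) lab T'
| cmt : TStep (.cmt T) .cmt T
| roll : TStep .roll .roll .done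
| abt : TStep .abt .abt .done

/-- Checkpoint types: either a checkpoint `ckp T` committed by the party
itself, or a checkpoint `ickp T` imposed by the other party. -/
inductive CkpT
| ckp : SType → CkpT
| ickp : SType → CkpT

/-- The underlying type of a checkpoint type. -/
def CkpT.ty : CkpT → SType
| .ckp T => T
| .ickp T => T

/-- Type configurations `init(T,T')[ ckpL > curL || ckpR > curR ]`. -/
structure TConf where
  initL : SType
  initR : SType
  ckpL : CkpT
  curL : SType
  ckpR : CkpT
  curR : SType

/-- Swapping the two parties of a type configuration. -/
def TConf.swap (c : TConf) : TConf :=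
  ⟨c.initR, c.initL, c.ckpR, c.curR, c.ckpL, c.curL⟩

/-- The reduction relation `|-->` on type configurations (rules [TS-Tau],
[TS-Com], [TS-Lab], [TS-Cmt1], [TS-Cmt2], [TS-Rll1], [TS-Rll2], [TS-Abt1],
together with their symmetric versions). -/
inductive TCRed : TConf → TConf → Prop
| tau : TStep T1 .tau T1' →
    TCRed ⟨T, T', K1, T1, K2, T2⟩ ⟨T, T', K1, T1', K2, T2⟩
| com : TStep T1 (.out S) T1' → TStep T2 (.inp S) T2' →
    TCRed ⟨T, T', K1, T1, K2, T2⟩ ⟨T, T', K1, T1', K2, T2'⟩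
| lab : TStep T1 (.sel l) T1' → TStep T2 (.brn l) T2' →
    TCRed ⟨T, T', K1, T1, K2, T2⟩ ⟨T, T', K1, T1', K2, T2'⟩
| cmt1 : TStep T1 .cmt T1' → K2 ≠ CkpT.ckp T2 →
    TCRed ⟨T, T', K1, T1, K2, T2⟩ ⟨T, T', .ckp T1', T1', .ickp T2, T2⟩
| cmt2 : TStep T1 .cmt T1' → K2 = CkpT.ckp T2 →
    TCRed ⟨T, T', K1, T1, K2, T2⟩ ⟨T, T', .ckp T1', T1', K2, T2⟩
| rll1 : TStep T1 .roll T1'' →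
    TCRed ⟨T, T', .ckp U1, T1, K2, T2⟩ ⟨T, T', .ckp U1, U1, K2, K2.ty⟩
| rll2 : TStep T1 .roll T1'' →
    TCRed ⟨T, T', .ickp U1, T1, K2, T2⟩ ⟨T, T', .ickp U1, .err, K2, .err⟩
| abt1 : TStep T1 .abt T1'' →
    TCRed ⟨T, T', K1, T1, K2, T2⟩ ⟨T, T', .ckp T, T, .ckp T', T'⟩
| symm : TCRed c1 c2 → TCRed c1.swap c2.swap

/-- The initial type configuration `init(T1,T2)[T1 > T1 || T2 > T2]`. -/
def initConf (T1 T2 : SType) : TConf := ⟨T1, T2, .ckp T1, T1, .ckp T2, T2⟩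

/-- Compliance of two session types: every configuration reachable from the
initial configuration and without `|-->`-successors is in the successful
(`end`) state on both sides. -/
def Compliant (T1 T2 : SType) : Prop :=
  ∀ c, Relation.ReflTransGen TCRed (initConf T1 T2) c →
    (∀ c', ¬ TCRed c c') → c.curL = SType.done ∧ c.curR = SType.done

/-! Every type that a party can reach is `err`, `end`, or is obtained from one of the types it
starts with by repeatedly taking continuations and unfolding recursions. That only finitely many
types are obtained in this way from a type `T` is shown by a depth-first search which descends
through the syntax of `T`, delaying the substitutions `N₁/t₁, …, Nₖ/tₖ` caused by the recursions
`Nᵢ` unfolded so far: on meeting `tᵢ` the search is back at `Nᵢ`, which it has already visited.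

Substitution may capture variables, so delaying is sound only while no `Nᵢ` has a free variable
that gets bound later on. When the search meets a binder of a variable `u` free in `T`, the
recursion it has reached has fewer free variables than `T`, and induction on the number of free
variables takes over. -/

/-- The points that can be reached from `a` by repeatedly passing from a point outside `R` to one
of its successors: a depth-first search from `a` in which the points of `R` count as visited. -/
def reach {α : Type*} (next : α → Set α) (R : Set α) (a : α) : Set α :=
  {b | Relation.ReflTransGen (fun x y => x ∉ R ∧ y ∈ next x) a b}

section Reach

variable {α : Type*} {next : α → Set α} {R R' : Set α} {a : α}

theorem reach_anti (h : R ⊆ R') : reach next R' a ⊆ reach next R a :=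
  fun _ hb => Relation.ReflTransGen.mono (fun _ _ hxy => ⟨fun hx => hxy.1 (h hx), hxy.2⟩) _ _ hb

theorem reach_subset_singleton_of_mem (ha : a ∈ R) : reach next R a ⊆ {a} := by
  intro b hb
  rcases hb.cases_head with rfl | ⟨_, ⟨ha', _⟩, _⟩
  · rfl
  · exact absurd ha ha'

/- A path from `a` can be cut at its last visit to `a`, so the rest of it may treat `a` as
visited. -/
theorem reach_subset_insert_biUnion :
    reach next R a ⊆ insert a (⋃ b ∈ next a, reach next (insert a R) b) := by
  intro c hc
  induction hc with
  | refl => exact Set.mem_insert _ _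
  | @tail x y _ hxy ih =>
    obtain ⟨hx, hy⟩ := hxy
    refine Or.inr (Set.mem_iUnion₂.2 ?_)
    by_cases hxa : x = a
    · exact ⟨y, hxa ▸ hy, .refl⟩
    · obtain ⟨b, hb, hbx⟩ := Set.mem_iUnion₂.1 (ih.resolve_left hxa)
      exact ⟨b, hb, hbx.tail ⟨by simp [hxa, hx], hy⟩⟩

theorem finite_reach_of_next (ha : (next a).Finite)
    (h : ∀ b ∈ next a, (reach next (insert a R) b).Finite) : (reach next R a).Finite :=
  ((ha.biUnion h).insert a).subset reach_subset_insert_biUnion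

end Reach

namespace SType

/-- The variables that occur free in a session type. -/
def freeVars : SType → Set Name
  | .out _ T | .inp _ T | .sel _ T | .cmt T => freeVars T
  | .brn bs => ⋃ b : {b // b ∈ bs}, freeVars b.1.2
  | .choice T U => freeVars T ∪ freeVars U
  | .tvar x => {x}
  | .mu t T => freeVars T \ {t}
  | .done | .err | .roll | .abt => ∅
termination_by T => sizeOf T
decreasing_by
  all_goals simp_wf
  all_goals try omega
  obtain ⟨⟨l, T⟩, hb⟩ := b
  have := List.sizeOf_lt_of_mem hb
  simp only [Prod.mk.sizeOf_spec] at this ⊢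
  omega

theorem finite_freeVars (T : SType) : T.freeVars.Finite := by
  fun_induction freeVars T with
  | case5 bs ih =>
    have : Finite {b // b ∈ bs} := bs.finite_toSet.to_subtype
    exact Set.finite_iUnion ih
  | case6 T U ihT ihU => exact ihT.union ihU
  | case8 t T ih => exact ih.sdiff
  | _ => simp_all

theorem mem_freeVars_brn {x : Name} {bs : List (Name × SType)} :
    x ∈ (brn bs).freeVars ↔ ∃ b ∈ bs, x ∈ b.2.freeVars := by
  simp [freeVars]

theorem subst_brn (t : Name) (U : SType) (bs : List (Name × SType)) :
    subst t U (.brn bs) = .brn (bs.map fun b => (b.1, subst t U b.2)) := by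
  rw [subst]
  exact congrArg brn (List.attach_map_val (f := fun b : Name × SType => (b.1, subst t U b.2)))

theorem subst_of_notMem_freeVars {t : Name} {U T : SType} (ht : t ∉ T.freeVars) :
    subst t U T = T := by
  fun_induction subst t U T with
  | case4 bs ih =>
    have hbs : ∀ b ∈ bs.attach, (b.1.1, subst t U b.1.2) = b.1 := fun b _ =>
      Prod.ext rfl (ih b fun hb => ht (mem_freeVars_brn.2 ⟨b.1, b.2, hb⟩))
    rw [List.map_congr_left hbs, List.attach_map_subtype_val]
  | _ => grind [freeVars]

theorem freeVars_subst_subset (t : Name) (U T : SType) :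
    (subst t U T).freeVars ⊆ U.freeVars ∪ T.freeVars \ {t} := by
  intro x hx
  fun_induction subst t U T with
  | case4 bs ih =>
    obtain ⟨_, hb, hx⟩ := mem_freeVars_brn.1 hx
    obtain ⟨b, _, rfl⟩ := List.mem_map.1 hb
    exact (ih b hx).imp_right fun h => ⟨mem_freeVars_brn.2 ⟨b.1, b.2, h.1⟩, h.2⟩
  | _ => grind [freeVars]

/-- The immediate continuations of a session type; a recursion continues as its unfolding. Unlike
`TStep`, this unfolds a recursion only once, whether or not the result can act. -/
def next : SType → Set SType
  | .out _ T | .inp _ T | .sel _ T | .cmt T => {T}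
  | .brn bs => {T | ∃ l, (l, T) ∈ bs}
  | .choice T U => {T, U}
  | .mu t T => {subst t (.mu t T) T}
  | .tvar _ | .done | .err | .roll | .abt => ∅

theorem finite_next (T : SType) : T.next.Finite := by
  cases T with
  | brn bs => exact (bs.finite_toSet.image Prod.snd).subset fun T ⟨l, h⟩ => ⟨(l, T), h, rfl⟩
  | _ => simp [next]

theorem freeVars_subset_of_mem_next {T U : SType} (h : U ∈ T.next) :
    U.freeVars ⊆ T.freeVars := by
  cases T with
  | brn bs =>
    obtain ⟨l, h⟩ := h
    rw [freeVars]
    exact Set.subset_iUnion (fun b : {b // b ∈ bs} => b.1.2.freeVars) ⟨(l, U), h⟩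
  | mu t T =>
    obtain rfl := h
    simpa [freeVars] using freeVars_subst_subset t (.mu t T) T
  | _ => grind [next, freeVars]

/-- Session types whose outermost constructor is neither a variable nor a recursion, so that it
is left in place by substitutions. -/
def IsGuarded : SType → Prop
  | .tvar _ | .mu _ _ => False
  | _ => True

theorem IsGuarded.subst {T : SType} (hT : T.IsGuarded) (t : Name) (U : SType) :
    (SType.subst t U T).IsGuarded := by
  cases T <;> simp_all [IsGuarded, SType.subst]

theorem next_subst {T : SType} (hT : T.IsGuarded) (t : Name) (U : SType) :
    (SType.subst t U T).next = SType.subst t U '' T.next := by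
  cases T with
  | brn bs =>
    ext V
    simp only [subst_brn, next, List.mem_map, Set.mem_ofPred_eq, Set.mem_image]
    constructor
    · rintro ⟨_, ⟨l, W⟩, h, rfl, rfl⟩
      exact ⟨W, ⟨l, h⟩, rfl⟩
    · rintro ⟨W, ⟨l, h⟩, rfl⟩
      exact ⟨l, (l, W), h, rfl⟩
  | choice T₁ T₂ => simp [SType.subst, next, Set.image_pair]
  | _ => simp_all [IsGuarded, SType.subst, next]

theorem sizeOf_lt_of_mem_next {T U : SType} (hT : T.IsGuarded) (hU : U ∈ T.next) :
    sizeOf U < sizeOf T := by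
  cases T with
  | brn bs =>
    obtain ⟨l, h⟩ := hU
    have := List.sizeOf_lt_of_mem h
    simp only [Prod.mk.sizeOf_spec, brn.sizeOf_spec] at this ⊢
    omega
  | choice T₁ T₂ => rcases hU with rfl | rfl <;> rw [choice.sizeOf_spec] <;> omega
  | mu | tvar => exact hT.elim
  | _ => simp_all [next]

/-- The successive substitutions of the types in `ρ` for the variables they are paired with, the
head of the list being substituted first. -/
def substs (ρ : List (Name × SType)) (T : SType) : SType :=
  ρ.foldl (fun T p => SType.subst p.1 p.2 T) T

theorem substs_nil : substs [] = id := rfl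

theorem substs_cons (p : Name × SType) (ρ : List (Name × SType)) :
    substs (p :: ρ) = substs ρ ∘ SType.subst p.1 p.2 := rfl

theorem next_substs (ρ : List (Name × SType)) {T : SType} (hT : T.IsGuarded) :
    (substs ρ T).next = substs ρ '' T.next := by
  induction ρ generalizing T with
  | nil => simp [substs_nil]
  | cons p ρ ih =>
    rw [substs_cons, Function.comp_apply, ih (hT.subst p.1 p.2), next_subst hT, Set.image_comp]

theorem substs_mu (ρ : List (Name × SType)) (u : Name) (T : SType) :
    substs ρ (.mu u T) = .mu u (substs (ρ.filter (·.1 ≠ u)) T) := by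
  induction ρ generalizing T with
  | nil => rfl
  | cons p ρ ih =>
    by_cases hp : p.1 = u <;> simp_all [substs, SType.subst, eq_comm]

theorem substs_of_notMem_freeVars {ρ : List (Name × SType)} {T : SType}
    (h : ∀ p ∈ ρ, p.1 ∉ T.freeVars) : substs ρ T = T := by
  induction ρ with
  | nil => rfl
  | cons p ρ ih =>
    rw [List.forall_mem_cons] at h
    rw [substs, List.foldl_cons, subst_of_notMem_freeVars h.1]
    exact ih h.2

theorem substs_tvar {ρ : List (Name × SType)} (h : ∀ p ∈ ρ, ∀ q ∈ ρ, p.1 ∉ q.2.freeVars)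
    (x : Name) : substs ρ (.tvar x) = .tvar x ∨ ∃ p ∈ ρ, substs ρ (.tvar x) = p.2 := by
  induction ρ with
  | nil => exact .inl rfl
  | cons p ρ ih =>
    by_cases hx : x = p.1
    · have : substs ρ p.2 = p.2 :=
        substs_of_notMem_freeVars fun q hq => h q (.tail _ hq) p (.head _)
      exact .inr ⟨p, .head _, by simpa [substs, SType.subst, hx] using this⟩
    · have hρ := ih fun q hq r hr => h q (.tail _ hq) r (.tail _ hr)
      simp only [substs, List.foldl_cons, SType.subst, if_neg hx]
      exact hρ.imp_right fun ⟨q, hq, e⟩ => ⟨q, .tail _ hq, e⟩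

theorem substs_append_singleton (ρ : List (Name × SType)) (t : Name) (U T : SType) :
    substs (ρ ++ [(t, U)]) T = SType.subst t U (substs ρ T) := by
  simp [substs]

theorem finite_reach_substs_tvar {ρ : List (Name × SType)}
    (h : ∀ p ∈ ρ, ∀ q ∈ ρ, p.1 ∉ q.2.freeVars) (x : Name) :
    (reach next {N | ∃ p ∈ ρ, p.2 = N} (substs ρ (.tvar x))).Finite := by
  rcases substs_tvar h x with hx | ⟨p, hp, hx⟩
  · rw [hx]
    exact finite_reach_of_next (finite_next _) fun _ h => h.elim
  · rw [hx]
    exact (Set.finite_singleton _).subset (reach_subset_singleton_of_mem ⟨p, hp, rfl⟩)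

/- The search from `T` under the delayed substitutions `ρ`. The recursions in `ρ` count as visited,
and the types with fewer free variables are left to the induction that provides `ih`. -/
theorem finite_reach_substs {F : Set Name}
    (ih : ∀ S : SType, S.freeVars ⊂ F → (reach next ∅ S).Finite)
    (ρ : List (Name × SType)) (hρ : ∀ p ∈ ρ, p.1 ∉ F ∧ p.2.freeVars ⊆ F)
    (T : SType) (hT : (substs ρ T).freeVars ⊆ F) :
    (reach next {N | ∃ p ∈ ρ, p.2 = N} (substs ρ T)).Finite := by
  by_cases hguard : T.IsGuarded
  · refine finite_reach_of_next (finite_next _) fun V hV => ?_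
    have hVF := (freeVars_subset_of_mem_next hV).trans hT
    rw [next_substs ρ hguard] at hV
    obtain ⟨U, hU, rfl⟩ := hV
    have := sizeOf_lt_of_mem_next hguard hU
    exact (finite_reach_substs ih ρ hρ U hVF).subset (reach_anti (Set.subset_insert _ _))
  cases T with
  | tvar x =>
    exact finite_reach_substs_tvar (fun p hp q hq hpq => (hρ p hp).1 ((hρ q hq).2 hpq)) x
  | mu u T =>
    rw [substs_mu] at hT ⊢
    set ρ' := ρ.filter (·.1 ≠ u)
    set N := SType.mu u (substs ρ' T) with hN
    by_cases hu : u ∈ F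
    · have hNF : N.freeVars ⊂ F :=
        (Set.ssubset_iff_of_subset hT).2 ⟨u, hu, by simp [hN, freeVars]⟩
      exact (ih N hNF).subset (reach_anti (Set.empty_subset _))
    · refine finite_reach_of_next (finite_next _) fun V hV => ?_
      have hVF := (freeVars_subset_of_mem_next hV).trans hT
      obtain rfl : V = substs (ρ' ++ [(u, N)]) T := by rw [substs_append_singleton]; exact hV
      have hρN : ∀ p ∈ ρ' ++ [(u, N)], p.1 ∉ F ∧ p.2.freeVars ⊆ F := by grind
      refine (finite_reach_substs ih _ hρN T hVF).subset (reach_anti ?_)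
      rintro _ ⟨p, hp, rfl⟩
      grind
  | _ => exact absurd trivial hguard
termination_by sizeOf T

theorem finite_reach_next (T : SType) : (reach next ∅ T).Finite := by
  have ih (S : SType) (hS : S.freeVars ⊂ T.freeVars) : (reach next ∅ S).Finite :=
    have := Set.ncard_lt_ncard hS T.finite_freeVars
    finite_reach_next S
  simpa [substs] using finite_reach_substs ih [] (by simp) T subset_rfl
termination_by T.freeVars.ncard

end SType

theorem TStep.eq_done_or_mem_reach {T U : SType} {a : TLabel} (h : TStep T a U) :
    U = .done ∨ U ∈ reach SType.next ∅ T := by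
  induction h with
  | unfold _ ih => exact ih.imp_right (.head ⟨Set.notMem_empty _, rfl⟩)
  | roll | abt => exact .inl rfl
  | brn h => exact .inr (.single ⟨Set.notMem_empty _, _, h⟩)
  | _ => exact .inr (.single ⟨Set.notMem_empty _, by simp [SType.next]⟩)

/-- Sets of session types that contain `err`, the type that a forbidden rollback leads to, and are
closed under the transitions of the types in them. -/
structure IsStepClosed (X : Set SType) : Prop where
  err_mem : .err ∈ X
  mem_of_step {T U : SType} {a : TLabel} : TStep T a U → T ∈ X → U ∈ X

theorem exists_finite_isStepClosed_superset {S : Set SType} (hS : S.Finite) :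
    ∃ X, S ⊆ X ∧ X.Finite ∧ IsStepClosed X := by
  refine ⟨⋃ T ∈ insert .err (insert .done S), reach SType.next ∅ T, fun T hT => ?_,
    ((hS.insert _).insert _).biUnion fun T _ => T.finite_reach_next, ?_, fun {T U a} h hT => ?_⟩
  · exact Set.mem_biUnion (.inr (.inr hT)) .refl
  · exact Set.mem_biUnion (.inl rfl) .refl
  · obtain ⟨V, hV, hVT⟩ := Set.mem_iUnion₂.1 hT
    rcases h.eq_done_or_mem_reach with rfl | hTU
    · exact Set.mem_biUnion (.inr (.inl rfl)) .refl
    · exact Set.mem_biUnion hV (hVT.trans hTU)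

theorem CkpT.finite_preimage_ty {X : Set SType} (hX : X.Finite) :
    (CkpT.ty ⁻¹' X).Finite := by
  refine ((hX.image CkpT.ckp).union (hX.image CkpT.ickp)).subset ?_
  rintro (T | T) hT
  exacts [.inl ⟨T, hT, rfl⟩, .inr ⟨T, hT, rfl⟩]

namespace TConf

/-- The type configurations in which every type of the left party is in `X` and every type of the
right party is in `Y`. -/
def within (X Y : Set SType) : Set TConf :=
  {c | (c.initL ∈ X ∧ c.ckpL.ty ∈ X ∧ c.curL ∈ X) ∧ c.initR ∈ Y ∧ c.ckpR.ty ∈ Y ∧ c.curR ∈ Y}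

theorem finite_within {X Y : Set SType} (hX : X.Finite) (hY : Y.Finite) : (within X Y).Finite := by
  have hL := hX.prod ((CkpT.finite_preimage_ty hX).prod hX)
  have hR := hY.prod ((CkpT.finite_preimage_ty hY).prod hY)
  refine Set.Finite.of_injOn
    (f := fun c => ((c.initL, c.ckpL, c.curL), (c.initR, c.ckpR, c.curR)))
    (fun c hc => hc) (fun c _ d _ h => ?_) (hL.prod hR)
  cases c; cases d
  simp_all

theorem mem_within_of_red {X Y : Set SType} (hX : IsStepClosed X) (hY : IsStepClosed Y)
    {c d : TConf} : TCRed c d → c ∈ within X Y → d ∈ within X Y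
  | .tau h, ⟨⟨iL, kL, cL⟩, iR, kR, cR⟩ => ⟨⟨iL, kL, hX.mem_of_step h cL⟩, iR, kR, cR⟩
  | .com h h', ⟨⟨iL, kL, cL⟩, iR, kR, cR⟩ | .lab h h', ⟨⟨iL, kL, cL⟩, iR, kR, cR⟩ =>
    ⟨⟨iL, kL, hX.mem_of_step h cL⟩, iR, kR, hY.mem_of_step h' cR⟩
  | .cmt1 h _, ⟨⟨iL, _, cL⟩, iR, _, cR⟩ =>
    ⟨⟨iL, hX.mem_of_step h cL, hX.mem_of_step h cL⟩, iR, cR, cR⟩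
  | .cmt2 h _, ⟨⟨iL, _, cL⟩, iR, kR, cR⟩ =>
    ⟨⟨iL, hX.mem_of_step h cL, hX.mem_of_step h cL⟩, iR, kR, cR⟩
  | .rll1 _, ⟨⟨iL, kL, _⟩, iR, kR, _⟩ => ⟨⟨iL, kL, kL⟩, iR, kR, kR⟩
  | .rll2 _, ⟨⟨iL, kL, _⟩, iR, kR, _⟩ => ⟨⟨iL, kL, hX.err_mem⟩, iR, kR, hY.err_mem⟩
  | .abt1 _, ⟨⟨iL, _, _⟩, iR, _, _⟩ => ⟨⟨iL, iL, iL⟩, iR, iR, iR⟩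
  | .symm h, ⟨hL, hR⟩ => (mem_within_of_red hY hX h ⟨hR, hL⟩).symm

end TConf

theorem type_transition_system_finite_general (c : TConf) :
    {d : TConf | Relation.ReflTransGen TCRed c d}.Finite := by
  obtain ⟨X, hcX, hXfin, hX⟩ :=
    exists_finite_isStepClosed_superset (Set.toFinite {c.initL, c.ckpL.ty, c.curL})
  obtain ⟨Y, hcY, hYfin, hY⟩ :=
    exists_finite_isStepClosed_superset (Set.toFinite {c.initR, c.ckpR.ty, c.curR})
  refine (TConf.finite_within hXfin hYfin).subset fun d hd => ?_
  induction hd with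
  | refl => simp_all [TConf.within, Set.insert_subset_iff]
  | tail _ h ih => exact TConf.mem_within_of_red hX hY h ih

/-- **Finiteness of the type transition system**: the set of type
configurations reachable from the initial configuration of two session types
is finite. -/
theorem type_transition_system_finite (T1 T2 : SType) :
    {c : TConf | Relation.ReflTransGen TCRed (initConf T1 T2) c}.Finite :=
  type_transition_system_finite_general (initConf T1 T2)
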